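/- arXiv:1810.04946 — 4 statements merged into one kernel-verified Lean document; each statement's English description precedes it below -/
import Mathlib

section
/- Let n ≥ 1, let K be a real n×n symmetric positive definite matrix, let 𝟏 ∈ ℝⁿ be the all-ones vector and let f ∈ ℝⁿ. Then 𝟏ᵀK⁻¹𝟏 > 0 and the limit as σ → ∞ of σ² 𝟏ᵀ (σ²𝟏𝟏ᵀ + K)⁻¹ f exists and equals (K⁻¹𝟏 / (𝟏ᵀK⁻¹𝟏))ᵀ f. -/
open Matrix Filter

/-!
With `a = 𝟏ᵀK⁻¹𝟏`, the row vector `𝟏ᵀK⁻¹` satisfies `𝟏ᵀK⁻¹(t𝟏𝟏ᵀ + K) = (1 + t a)𝟏ᵀ`. Inverting,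
`t𝟏ᵀ(t𝟏𝟏ᵀ + K)⁻¹ = (t⁻¹ + a)⁻¹𝟏ᵀK⁻¹`, which tends to `a⁻¹𝟏ᵀK⁻¹` as `t = σ²` tends to infinity.
-/

section RankOneUpdate

variable {ι : Type*} [Fintype ι] [DecidableEq ι]

theorem det_vecMulVec_add {R : Type*} [CommRing R] {A : Matrix ι ι R} (hA : IsUnit A.det)
    (u v : ι → R) : (vecMulVec u v + A).det = A.det * (1 + v ⬝ᵥ (A⁻¹ *ᵥ u)) := by
  rw [add_comm, vecMulVec_eq Unit, det_add_replicateCol_mul_replicateRow hA, Matrix.mul_assoc,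
    ← replicateCol_mulVec, ← det_one_add_mul_comm, det_one_add_replicateCol_mul_replicateRow]

theorem vecMul_inv_vecMul_vecMulVec_add {R : Type*} [CommRing R] {A : Matrix ι ι R}
    (hA : IsUnit A.det) (u v : ι → R) :
    (v ᵥ* A⁻¹) ᵥ* (vecMulVec u v + A) = (1 + v ⬝ᵥ (A⁻¹ *ᵥ u)) • v := by
  rw [vecMul_add, vecMul_vecMulVec, vecMul_vecMul, nonsing_inv_mul A hA, vecMul_one,
    ← dotProduct_mulVec, add_comm, add_smul, one_smul]

theorem vecMul_vecMulVec_add_inv {𝕜 : Type*} [Field 𝕜] {A : Matrix ι ι 𝕜} (hA : IsUnit A.det)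
    {u v : ι → 𝕜} (h : 1 + v ⬝ᵥ (A⁻¹ *ᵥ u) ≠ 0) :
    v ᵥ* (vecMulVec u v + A)⁻¹ = (1 + v ⬝ᵥ (A⁻¹ *ᵥ u))⁻¹ • (v ᵥ* A⁻¹) := by
  have hdet : IsUnit (vecMulVec u v + A).det := by
    rw [det_vecMulVec_add hA]
    exact hA.mul h.isUnit
  rw [eq_inv_smul_iff₀ h, ← smul_vecMul, ← vecMul_inv_vecMul_vecMulVec_add hA, vecMul_vecMul,
    mul_nonsing_inv _ hdet, vecMul_one]

theorem smul_vecMul_smul_vecMulVec_add_inv {𝕜 : Type*} [Field 𝕜] {A : Matrix ι ι 𝕜}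
    (hA : IsUnit A.det) {u v : ι → 𝕜} {t : 𝕜} (ht : t ≠ 0) (h : t⁻¹ + v ⬝ᵥ (A⁻¹ *ᵥ u) ≠ 0) :
    t • (v ᵥ* (t • vecMulVec u v + A)⁻¹) = (t⁻¹ + v ⬝ᵥ (A⁻¹ *ᵥ u))⁻¹ • (v ᵥ* A⁻¹) := by
  have hfactor : 1 + v ⬝ᵥ (A⁻¹ *ᵥ (t • u)) = t * (t⁻¹ + v ⬝ᵥ (A⁻¹ *ᵥ u)) := by
    rw [mulVec_smul, dotProduct_smul, smul_eq_mul, mul_add, mul_inv_cancel₀ ht]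
  rw [← smul_vecMulVec, vecMul_vecMulVec_add_inv hA (hfactor ▸ mul_ne_zero ht h), hfactor,
    smul_smul, mul_inv, mul_inv_cancel_left₀ ht]

theorem tendsto_smul_vecMul_smul_vecMulVec_add_inv {𝕜 : Type*} [NormedField 𝕜]
    {A : Matrix ι ι 𝕜} (hA : IsUnit A.det) {u v : ι → 𝕜} (h : v ⬝ᵥ (A⁻¹ *ᵥ u) ≠ 0) :
    Tendsto (fun t : 𝕜 => t • (v ᵥ* (t • vecMulVec u v + A)⁻¹)) (Bornology.cobounded 𝕜)
      (nhds ((v ⬝ᵥ (A⁻¹ *ᵥ u))⁻¹ • (v ᵥ* A⁻¹))) := by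
  have hlim : Tendsto (fun t : 𝕜 => t⁻¹ + v ⬝ᵥ (A⁻¹ *ᵥ u)) (Bornology.cobounded 𝕜)
      (nhds (v ⬝ᵥ (A⁻¹ *ᵥ u))) := by
    simpa only [zero_add] using tendsto_inv₀_cobounded.add_const (v ⬝ᵥ (A⁻¹ *ᵥ u))
  refine ((hlim.inv₀ h).smul_const (v ᵥ* A⁻¹)).congr' ?_
  filter_upwards [Bornology.eventually_ne_cobounded 0, hlim.eventually_ne h] with t ht hsum
  exact (smul_vecMul_smul_vecMulVec_add_inv hA ht hsum).symm

end RankOneUpdate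

theorem stein_estimator_limit_general {ι 𝕜 : Type*} [Fintype ι] [DecidableEq ι] [NormedField 𝕜]
    {K : Matrix ι ι 𝕜} (hK : IsUnit K.det) {u v : ι → 𝕜} (h : v ⬝ᵥ (K⁻¹ *ᵥ u) ≠ 0) (f : ι → 𝕜) :
    Tendsto (fun t : 𝕜 => t * (v ⬝ᵥ ((t • vecMulVec u v + K)⁻¹ *ᵥ f))) (Bornology.cobounded 𝕜)
      (nhds (((v ⬝ᵥ (K⁻¹ *ᵥ u))⁻¹ • (v ᵥ* K⁻¹)) ⬝ᵥ f)) := by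
  have hdot : Continuous fun w : ι → 𝕜 => w ⬝ᵥ f := continuous_id.dotProduct continuous_const
  simpa only [Function.comp_def, smul_dotProduct _ _ f, smul_eq_mul, ← dotProduct_mulVec] using
    (hdot.tendsto _).comp (tendsto_smul_vecMul_smul_vecMulVec_add_inv hK h)

/-- The limit as `σ → ∞` of the Stein kernel estimator
`σ² 𝟏ᵀ (σ²𝟏𝟏ᵀ + K)⁻¹ f` is `(K⁻¹𝟏 / 𝟏ᵀK⁻¹𝟏)ᵀ f`. -/
theorem stein_estimator_limit
    {n : ℕ} (hn : 1 ≤ n)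
    (K : Matrix (Fin n) (Fin n) ℝ) (hK : K.PosDef) (f : Fin n → ℝ) :
    0 < (fun _ : Fin n => (1 : ℝ)) ⬝ᵥ (K⁻¹ *ᵥ (fun _ : Fin n => (1 : ℝ))) ∧
      Tendsto
        (fun σ : ℝ => σ ^ 2 * ((fun _ : Fin n => (1 : ℝ)) ⬝ᵥ
          ((σ ^ 2 • vecMulVec (fun _ : Fin n => (1 : ℝ)) (fun _ : Fin n => (1 : ℝ)) + K)⁻¹ *ᵥ f)))
        atTop
        (nhds ((((fun _ : Fin n => (1 : ℝ)) ⬝ᵥ (K⁻¹ *ᵥ (fun _ : Fin n => (1 : ℝ))))⁻¹ •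
          (K⁻¹ *ᵥ (fun _ : Fin n => (1 : ℝ)))) ⬝ᵥ f)) := by
  have : Nonempty (Fin n) := ⟨⟨0, hn⟩⟩
  have hone : (fun _ : Fin n => (1 : ℝ)) ≠ 0 := one_ne_zero
  have hpos : 0 < (fun _ : Fin n => (1 : ℝ)) ⬝ᵥ (K⁻¹ *ᵥ fun _ => 1) := by
    simpa only [star_trivial] using hK.inv.dotProduct_mulVec_pos hone
  have hsymm : (fun _ : Fin n => (1 : ℝ)) ᵥ* K⁻¹ = K⁻¹ *ᵥ fun _ => 1 := by
    rw [← mulVec_transpose, (isHermitian_iff_isSymm.1 hK.inv.isHermitian).eq]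
  have hsq : Tendsto (fun σ : ℝ => σ ^ 2) atTop (Bornology.cobounded ℝ) :=
    (tendsto_pow_atTop two_ne_zero).mono_right IsOrderBornology.atTop_le_cobounded
  have hdet : IsUnit K.det := (isUnit_iff_isUnit_det K).1 hK.isUnit
  exact ⟨hpos, hsymm ▸ (stein_estimator_limit_general hdet hpos.ne' f).comp hsq⟩
end

section
/- Let H be a real inner product space and let v₁, …, vₙ ∈ H be linearly independent, with Gram matrix K defined by K_{ij} = ⟨vᵢ, vⱼ⟩ (which is then symmetric positive definite, hence invertible). Let 𝟏 ∈ ℝⁿ be the all-ones vector. Then the infimum over all w ∈ ℝⁿ with 𝟏ᵀw = 1 of sup{|∑_{i=1}^n wᵢ⟨f, vᵢ⟩| : f ∈ H, ‖f‖ ≤ 1} equals (𝟏ᵀK⁻¹𝟏)^{−1/2}, and this infimum is attained at w = K⁻¹𝟏/(𝟏ᵀK⁻¹𝟏). -/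
open Matrix
open scoped RealInnerProductSpace

/-!
The worst case error of the weights `w` is the norm of `∑ i, wᵢ • vᵢ`. For any `c ≠ 0` in place
of `𝟏`, the interpolant `u = ∑ i, (K⁻¹c)ᵢ • vᵢ` satisfies `⟪u, vᵢ⟫ = cᵢ`, so the constraint
`cᵀw = 1` places `∑ i, wᵢ • vᵢ` on the hyperplane `{x | ⟪x, u⟫ = 1}`. By Cauchy–Schwarz the norm
there is at least `‖u‖⁻¹`, which is attained at `‖u‖⁻² • u`, and `‖u‖² = cᵀK⁻¹c`.
-/

section MinimalNorm

variable {𝕜 E : Type*} [RCLike 𝕜] [SeminormedAddCommGroup E]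

theorem inv_norm_le_norm_of_inner_eq_one [InnerProductSpace 𝕜 E] {x u : E}
    (h : inner 𝕜 x u = 1) : ‖u‖⁻¹ ≤ ‖x‖ := by
  have one_le : 1 ≤ ‖x‖ * ‖u‖ := by simpa [h] using norm_inner_le_norm (𝕜 := 𝕜) x u
  have norm_pos : 0 < ‖u‖ := pos_of_mul_pos_right (one_pos.trans_le one_le) (norm_nonneg x)
  exact (inv_le_iff_one_le_mul₀ norm_pos).mpr one_le

theorem norm_inv_norm_sq_smul [NormedSpace ℝ E] (u : E) : ‖(‖u‖ ^ 2)⁻¹ • u‖ = ‖u‖⁻¹ := by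
  rw [norm_smul, norm_inv, norm_pow, norm_norm]
  field

end MinimalNorm

section MinNormInterpolant

variable {ι H : Type*} [Fintype ι] [DecidableEq ι]
variable [SeminormedAddCommGroup H] [InnerProductSpace ℝ H] {v : ι → H}

/-- The vector of least norm among those with `⟪u, v i⟫ = c i` for all `i`, written in terms of the
Gram matrix of `v`; it has this meaning when that matrix is invertible. -/
noncomputable def minNormInterpolant (v : ι → H) (c : ι → ℝ) : H :=
  Fintype.linearCombination ℝ v ((gram ℝ v)⁻¹ *ᵥ c)

theorem inner_linearCombination_minNormInterpolant (hv : IsUnit (gram ℝ v).det) (w c : ι → ℝ) :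
    ⟪Fintype.linearCombination ℝ v w, minNormInterpolant v c⟫ = c ⬝ᵥ w := by
  simp only [minNormInterpolant, Fintype.linearCombination_apply]
  rw [← star_dotProduct_gram_mulVec, mulVec_mulVec, mul_nonsing_inv _ hv, one_mulVec,
    star_trivial, dotProduct_comm]

theorem norm_sq_minNormInterpolant (hv : IsUnit (gram ℝ v).det) (c : ι → ℝ) :
    ‖minNormInterpolant v c‖ ^ 2 = c ⬝ᵥ ((gram ℝ v)⁻¹ *ᵥ c) := by
  rw [← real_inner_self_eq_norm_sq]
  exact inner_linearCombination_minNormInterpolant hv _ c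

theorem norm_minNormInterpolant (hv : IsUnit (gram ℝ v).det) (c : ι → ℝ) :
    ‖minNormInterpolant v c‖ = √(c ⬝ᵥ ((gram ℝ v)⁻¹ *ᵥ c)) := by
  rw [← norm_sq_minNormInterpolant hv, Real.sqrt_sq (norm_nonneg _)]

/-- The weights `K⁻¹c / (cᵀK⁻¹c)`, with `K` the Gram matrix of `v`, which minimize the worst case
error subject to `cᵀw = 1`. -/
noncomputable def optimalWeights (v : ι → H) (c : ι → ℝ) : ι → ℝ :=
  (c ⬝ᵥ ((gram ℝ v)⁻¹ *ᵥ c))⁻¹ • ((gram ℝ v)⁻¹ *ᵥ c)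

theorem dotProduct_optimalWeights (hv : (gram ℝ v).PosDef) {c : ι → ℝ} (hc : c ≠ 0) :
    c ⬝ᵥ optimalWeights v c = 1 := by
  have pos : 0 < c ⬝ᵥ ((gram ℝ v)⁻¹ *ᵥ c) := by
    simpa only [star_trivial] using hv.inv.dotProduct_mulVec_pos hc
  rw [optimalWeights, dotProduct_smul, smul_eq_mul, inv_mul_cancel₀ pos.ne']

theorem linearCombination_optimalWeights (hv : IsUnit (gram ℝ v).det) (c : ι → ℝ) :
    Fintype.linearCombination ℝ v (optimalWeights v c) =
      (‖minNormInterpolant v c‖ ^ 2)⁻¹ • minNormInterpolant v c := by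
  rw [norm_sq_minNormInterpolant hv, optimalWeights, map_smul, minNormInterpolant]

end MinNormInterpolant

section WorstCaseError

variable {ι H : Type*} [Fintype ι] [NormedAddCommGroup H] [InnerProductSpace ℝ H] {v : ι → H}

/-- The worst case error, over the unit ball of `H`, of the weights `w` on the functionals
`⟪·, v i⟫`. The set of errors is nonempty and bounded, so its real `sSup` is a genuine supremum. -/
noncomputable def worstCaseError (v : ι → H) (w : ι → ℝ) : ℝ :=
  sSup ((fun f : H => |∑ i, w i * ⟪f, v i⟫|) '' {f : H | ‖f‖ ≤ 1})

theorem worstCaseError_eq_norm (v : ι → H) (w : ι → ℝ) :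
    worstCaseError v w = ‖Fintype.linearCombination ℝ v w‖ := by
  have error_eq (f : H) : |∑ i, w i * ⟪f, v i⟫| =
      ‖innerSL ℝ (Fintype.linearCombination ℝ v w) f‖ := by
    simp only [innerSL_apply_apply, Fintype.linearCombination_apply, real_inner_comm f, inner_sum,
      real_inner_smul_right, Real.norm_eq_abs]
  have ball_eq : {f : H | ‖f‖ ≤ 1} = Metric.closedBall 0 1 :=
    Set.ext fun _ => mem_closedBall_zero_iff.symm
  simp only [worstCaseError, error_eq, ball_eq]
  rw [ContinuousLinearMap.sSup_unitClosedBall_eq_norm, innerSL_apply_norm]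

variable [DecidableEq ι]

theorem inv_norm_minNormInterpolant_le_worstCaseError (hv : IsUnit (gram ℝ v).det) {w c : ι → ℝ}
    (hw : c ⬝ᵥ w = 1) : ‖minNormInterpolant v c‖⁻¹ ≤ worstCaseError v w := by
  rw [worstCaseError_eq_norm]
  apply inv_norm_le_norm_of_inner_eq_one (𝕜 := ℝ)
  rw [inner_linearCombination_minNormInterpolant hv, hw]

theorem worstCaseError_optimalWeights (hv : IsUnit (gram ℝ v).det) (c : ι → ℝ) :
    worstCaseError v (optimalWeights v c) = ‖minNormInterpolant v c‖⁻¹ := by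
  rw [worstCaseError_eq_norm, linearCombination_optimalWeights hv, norm_inv_norm_sq_smul]

theorem optimal_worst_case_error_general (hv : LinearIndependent ℝ v) {c : ι → ℝ} (hc : c ≠ 0) :
    (gram ℝ v).PosDef ∧
      IsLeast (worstCaseError v '' {w | c ⬝ᵥ w = 1}) (√(c ⬝ᵥ ((gram ℝ v)⁻¹ *ᵥ c)))⁻¹ ∧
      c ⬝ᵥ optimalWeights v c = 1 ∧
      worstCaseError v (optimalWeights v c) = (√(c ⬝ᵥ ((gram ℝ v)⁻¹ *ᵥ c)))⁻¹ := by
  have posDef := posDef_gram_of_linearIndependent hv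
  have isUnit_det : IsUnit (gram ℝ v).det := posDef.det_pos.ne'.isUnit
  have feasible := dotProduct_optimalWeights posDef hc
  have attained := worstCaseError_optimalWeights isUnit_det c
  rw [← norm_minNormInterpolant isUnit_det]
  refine ⟨posDef, ⟨⟨optimalWeights v c, feasible, attained⟩, ?_⟩, feasible, attained⟩
  rintro _ ⟨w, hw, rfl⟩
  exact inv_norm_minNormInterpolant_le_worstCaseError isUnit_det hw

end WorstCaseError

/-- For linearly independent `v₁,…,vₙ` with Gram matrix `K`, the minimal worst case error
over weights summing to one is `(𝟏ᵀK⁻¹𝟏)^{-1/2}`, attained at `w = K⁻¹𝟏/(𝟏ᵀK⁻¹𝟏)`. -/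
theorem optimal_worst_case_error
    {H : Type*} [NormedAddCommGroup H] [InnerProductSpace ℝ H]
    {n : ℕ} (hn : 1 ≤ n) (v : Fin n → H) (hv : LinearIndependent ℝ v)
    (K : Matrix (Fin n) (Fin n) ℝ) (hK : K = Matrix.of fun i j => ⟪v i, v j⟫)
    (one : Fin n → ℝ) (hone : one = fun _ => 1)
    (wstar : Fin n → ℝ) (hwstar : wstar = (one ⬝ᵥ (K⁻¹ *ᵥ one))⁻¹ • (K⁻¹ *ᵥ one)) :
    K.PosDef ∧
      sInf ((fun w : Fin n → ℝ =>
          sSup ((fun f : H => |∑ i : Fin n, w i * ⟪f, v i⟫|) '' {f : H | ‖f‖ ≤ 1})) ''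
            {w : Fin n → ℝ | one ⬝ᵥ w = 1}) =
        (Real.sqrt (one ⬝ᵥ (K⁻¹ *ᵥ one)))⁻¹ ∧
      one ⬝ᵥ wstar = 1 ∧
      sSup ((fun f : H => |∑ i : Fin n, wstar i * ⟪f, v i⟫|) '' {f : H | ‖f‖ ≤ 1}) =
        (Real.sqrt (one ⬝ᵥ (K⁻¹ *ᵥ one)))⁻¹ := by
  subst hK hone hwstar
  have one_ne : (fun _ : Fin n => (1 : ℝ)) ≠ 0 := Function.ne_iff.mpr ⟨⟨0, hn⟩, one_ne_zero⟩
  obtain ⟨posDef, isLeast, feasible, attained⟩ := optimal_worst_case_error_general hv one_ne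
  exact ⟨posDef, isLeast.csInf_eq, feasible, attained⟩
end

section
/- Let (M, d) be a compact metric space and let s > 0 and c > 0. For points z₁, …, zₙ ∈ M define the fill distance h(z₁,…,zₙ) = sup_{x ∈ M} min_{1 ≤ i ≤ n} d(x, zᵢ). Let ν and P be Borel probability measures on M such that P is absolutely continuous with respect to ν with dP/dν ≥ w ν-almost everywhere for some w ∈ (0,1). Suppose there is a finite constant C such that, for every n ≥ 2, if Y₁, …, Yₙ are independent random points each with law ν then E[h(Y₁,…,Yₙ)^s] ≤ C n^{−c} (log n)^{c}. Then there is a finite constant C′ such that, for every n ≥ 2, if X₁, …, Xₙ are independent random points each with law P then E[h(X₁,…,Xₙ)^s] ≤ C′ n^{−c} (log n)^{c}. -/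
open MeasureTheory

/-- The fill distance of the points `z₁,…,zₙ` in a metric space:
`h(z) = sup_{x ∈ M} min_{1 ≤ i ≤ n} d(x, zᵢ)`. -/
noncomputable def fillDistance {M : Type*} [MetricSpace M] {n : ℕ} (z : Fin n → M) : ℝ :=
  ⨆ x : M, ⨅ i : Fin n, dist x (z i)

/-!
Since `w • ν ≤ P`, each point drawn from `P` is, with probability `w`, a draw from `ν`. Discarding
the other points can only increase the fill distance, so the mean over `n` points from `P` is at
most the mean over `K` points from `ν`, where `K` is binomial with parameters `n` and `w`. By a
Chernoff bound `K < w * n / 2 + 1` has exponentially small probability, and on this event the fill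
distance is at most the diameter; otherwise `K` is comparable to `n` and the rate for `ν` applies.
-/

open Set Real
open scoped ENNReal

theorem sum_binomial_succ {R : Type*} [CommSemiring R] (a b : R) (g : ℕ → R) (n : ℕ) :
    a * ∑ k ∈ Finset.range (n + 1), n.choose k * (a ^ k * b ^ (n - k) * g (k + 1)) +
        b * ∑ k ∈ Finset.range (n + 1), n.choose k * (a ^ k * b ^ (n - k) * g k) =
      ∑ k ∈ Finset.range (n + 2), (n + 1).choose k * (a ^ k * b ^ (n + 1 - k) * g k) := by
  rw [Finset.sum_choose_succ_mul fun i j => a ^ i * b ^ j * g i, add_comm, Finset.mul_sum,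
    Finset.mul_sum]
  congr 1 <;> refine Finset.sum_congr rfl fun k hk => ?_
  · rw [Nat.succ_sub (Nat.lt_succ_iff.1 (Finset.mem_range.1 hk)), pow_succ]
    ring
  · rw [pow_succ]
    ring

section SampleMean

variable {X : Type*} [MeasurableSpace X] {f : Set X → ℝ≥0∞} {μ ν P : Measure X}

/-- The mean of the set functional `f` over the set of `n` independent points with law `μ`.
Working with sets makes adding and discarding sample points expressible by `insert` and `⊆`. -/
noncomputable def sampleMean (μ : Measure X) (f : Set X → ℝ≥0∞) (n : ℕ) : ℝ≥0∞ :=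
  ∫⁻ z : Fin n → X, f (range z) ∂(Measure.pi fun _ => μ)

theorem measurable_insert_range (hfm : ∀ n, Measurable fun z : Fin n → X => f (range z)) (n : ℕ) :
    Measurable fun p : X × (Fin n → X) => f (insert p.1 (range p.2)) := by
  have hcons : Measurable fun p : X × (Fin n → X) => (Fin.cons p.1 p.2 : Fin (n + 1) → X) :=
    measurable_pi_iff.2 <| Fin.cases measurable_fst fun i =>
      (measurable_pi_apply i).comp measurable_snd
  simpa only [Function.comp_def, Fin.range_cons] using (hfm (n + 1)).comp hcons

theorem sampleMean_succ [SigmaFinite μ] (hfm : ∀ n, Measurable fun z : Fin n → X => f (range z))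
    (n : ℕ) :
    sampleMean μ f (n + 1) = ∫⁻ x, sampleMean μ (fun S => f (insert x S)) n ∂μ := by
  have hsplit := (measurePreserving_piFinSuccAbove (fun _ : Fin (n + 1) => μ) 0).symm
  have hrange (p : X × (Fin n → X)) :
      range ((MeasurableEquiv.piFinSuccAbove (fun _ : Fin (n + 1) => X) 0).symm p) =
        insert p.1 (range p.2) := by
    rw [MeasurableEquiv.piFinSuccAbove_symm_apply, Fin.insertNthEquiv_zero]
    exact Fin.range_cons p.1 p.2
  rw [sampleMean, ← hsplit.lintegral_comp (hfm (n + 1))]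
  simp only [hrange]
  exact lintegral_prod _ (measurable_insert_range hfm n).aemeasurable

theorem measurable_sampleMean_insert [SigmaFinite μ]
    (hfm : ∀ n, Measurable fun z : Fin n → X => f (range z)) (n : ℕ) :
    Measurable fun x => sampleMean μ (fun S => f (insert x S)) n :=
  (measurable_insert_range hfm n).lintegral_prod_right'

theorem sampleMean_insert_le (hf : Antitone f) (x : X) (n : ℕ) :
    sampleMean μ (fun S => f (insert x S)) n ≤ sampleMean μ f n :=
  lintegral_mono fun _ => hf (subset_insert _ _)

theorem sampleMean_le [IsProbabilityMeasure μ] {D : ℝ≥0∞} (hD : ∀ S, f S ≤ D) (n : ℕ) :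
    sampleMean μ f n ≤ D :=
  (lintegral_mono fun _ => hD _).trans_eq (by simp)

theorem lintegral_le_of_smul_le [IsProbabilityMeasure ν] [IsProbabilityMeasure P] {w : ℝ≥0∞}
    (hνP : w • ν ≤ P) {g : X → ℝ≥0∞} {a : ℝ≥0∞} (hg : ∀ x, g x ≤ a) :
    ∫⁻ x, g x ∂P ≤ w * ∫⁻ x, g x ∂ν + (1 - w) * a := by
  have := isFiniteMeasure_of_le P hνP
  have hmass : (P - w • ν) univ = 1 - w := by
    rw [Measure.sub_apply MeasurableSet.univ hνP]
    simp
  calc ∫⁻ x, g x ∂P = ∫⁻ x, g x ∂(P - w • ν) + w * ∫⁻ x, g x ∂ν := by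
        rw [← smul_eq_mul, ← lintegral_smul_measure, ← lintegral_add_measure,
          Measure.sub_add_cancel_of_le hνP]
    _ ≤ ∫⁻ _, a ∂(P - w • ν) + w * ∫⁻ x, g x ∂ν := by gcongr; exact hg _
    _ = w * ∫⁻ x, g x ∂ν + (1 - w) * a := by rw [lintegral_const, hmass, add_comm, mul_comm a]

theorem sampleMean_le_sum_binomial [IsProbabilityMeasure ν] [IsProbabilityMeasure P] {w : ℝ≥0∞}
    (hνP : w • ν ≤ P) (hf : Antitone f)
    (hfm : ∀ n, Measurable fun z : Fin n → X => f (range z)) (n : ℕ) :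
    sampleMean P f n ≤
      ∑ k ∈ Finset.range (n + 1), n.choose k * (w ^ k * (1 - w) ^ (n - k) * sampleMean ν f k) := by
  induction n generalizing f with
  | zero => simp [sampleMean]
  | succ n ih =>
    have hf_insert (x : X) : Antitone fun S => f (insert x S) := fun _ _ hST =>
      hf (insert_subset_insert hST)
    have hfm_insert (x : X) (k : ℕ) : Measurable fun z : Fin k → X => f (insert x (range z)) :=
      (measurable_insert_range hfm k).comp measurable_prodMk_left
    have hretained : ∫⁻ x, sampleMean P (fun S => f (insert x S)) n ∂ν ≤
        ∑ k ∈ Finset.range (n + 1),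
          n.choose k * (w ^ k * (1 - w) ^ (n - k) * sampleMean ν f (k + 1)) := by
      refine (lintegral_mono fun x => ih (hf_insert x) (hfm_insert x)).trans_eq ?_
      have hmeas := measurable_sampleMean_insert (μ := ν) hfm
      rw [lintegral_finsetSum _ fun k _ => ((hmeas k).const_mul _).const_mul _]
      refine Finset.sum_congr rfl fun k _ => ?_
      rw [lintegral_const_mul _ ((hmeas k).const_mul _), lintegral_const_mul _ (hmeas k),
        sampleMean_succ hfm]
    calc sampleMean P f (n + 1) = ∫⁻ x, sampleMean P (fun S => f (insert x S)) n ∂P :=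
          sampleMean_succ hfm n
      _ ≤ w * ∫⁻ x, sampleMean P (fun S => f (insert x S)) n ∂ν + (1 - w) * sampleMean P f n :=
          lintegral_le_of_smul_le hνP fun x => sampleMean_insert_le hf x n
      _ ≤ w * ∑ k ∈ Finset.range (n + 1),
              n.choose k * (w ^ k * (1 - w) ^ (n - k) * sampleMean ν f (k + 1)) +
            (1 - w) * ∑ k ∈ Finset.range (n + 1),
              n.choose k * (w ^ k * (1 - w) ^ (n - k) * sampleMean ν f k) := by
          gcongr
          exact ih hf hfm
      _ = _ := sum_binomial_succ w (1 - w) (sampleMean ν f) n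

theorem toReal_sampleMean_le_sum_binomial [IsProbabilityMeasure ν] [IsProbabilityMeasure P] {w : ℝ}
    (hw : 0 ≤ w) (hνP : ENNReal.ofReal w • ν ≤ P) (hf : Antitone f)
    (hfm : ∀ n, Measurable fun z : Fin n → X => f (range z)) {D : ℝ≥0∞} (hD : D ≠ ∞)
    (hfD : ∀ S, f S ≤ D) (n : ℕ) :
    (sampleMean P f n).toReal ≤
      ∑ k ∈ Finset.range (n + 1),
        n.choose k * (w ^ k * (1 - w) ^ (n - k) * (sampleMean ν f k).toReal) := by
  have hw1 : 0 ≤ 1 - w := sub_nonneg.2 (by simpa using hνP univ)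
  have hfinite (k : ℕ) : sampleMean ν f k ≠ ∞ := ne_top_of_le_ne_top hD (sampleMean_le hfD k)
  have hterm_nonneg (k : ℕ) :
      0 ≤ n.choose k * (w ^ k * (1 - w) ^ (n - k) * (sampleMean ν f k).toReal) := by
    positivity
  have hterm (k : ℕ) :
      ENNReal.ofReal (n.choose k * (w ^ k * (1 - w) ^ (n - k) * (sampleMean ν f k).toReal)) =
        n.choose k * (ENNReal.ofReal w ^ k * (1 - ENNReal.ofReal w) ^ (n - k) *
          sampleMean ν f k) := by
    rw [ENNReal.ofReal_mul (by positivity), ENNReal.ofReal_mul (by positivity),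
      ENNReal.ofReal_mul (by positivity), ENNReal.ofReal_pow hw, ENNReal.ofReal_pow hw1,
      ENNReal.ofReal_sub _ hw, ENNReal.ofReal_one, ENNReal.ofReal_natCast,
      ENNReal.ofReal_toReal (hfinite k)]
  refine ENNReal.toReal_le_of_le_ofReal (Finset.sum_nonneg fun k _ => hterm_nonneg k) ?_
  simpa only [ENNReal.ofReal_sum_of_nonneg fun k _ => hterm_nonneg k, hterm] using
    sampleMean_le_sum_binomial hνP hf hfm n

end SampleMean

section BinomialTail

variable {p : ℝ}

theorem sum_binomial_lt_le (hp0 : 0 ≤ p) (hp1 : p ≤ 1) {a : ℝ} (ha0 : 0 < a) (ha1 : a ≤ 1) (t : ℝ)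
    (n : ℕ) :
    ∑ k ∈ Finset.range (n + 1) with (k : ℕ) < t, n.choose k * (p ^ k * (1 - p) ^ (n - k)) ≤
      a ^ (-t) * (p * a + (1 - p)) ^ n := by
  have : 0 ≤ 1 - p := sub_nonneg.2 hp1
  calc ∑ k ∈ Finset.range (n + 1) with (k : ℕ) < t, n.choose k * (p ^ k * (1 - p) ^ (n - k))
      ≤ ∑ k ∈ Finset.range (n + 1) with (k : ℕ) < t,
          a ^ (k - t) * (n.choose k * (p ^ k * (1 - p) ^ (n - k))) := by
        refine Finset.sum_le_sum fun k hk => le_mul_of_one_le_left (by positivity) ?_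
        have hkt : k - t ≤ 0 := sub_nonpos.2 (Finset.mem_filter.1 hk).2.le
        exact one_le_rpow_of_pos_of_le_one_of_nonpos ha0 ha1 hkt
    _ ≤ ∑ k ∈ Finset.range (n + 1), a ^ (k - t) * (n.choose k * (p ^ k * (1 - p) ^ (n - k))) :=
        Finset.sum_le_sum_of_subset_of_nonneg (Finset.filter_subset _ _) fun k _ _ => by positivity
    _ = a ^ (-t) * (p * a + (1 - p)) ^ n := by
        rw [add_pow, Finset.mul_sum]
        refine Finset.sum_congr rfl fun k _ => ?_
        rw [sub_eq_neg_add, rpow_add ha0, rpow_natCast, mul_pow]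
        ring

theorem sum_binomial_lt_half_mean_add_one_le (hp0 : 0 ≤ p) (hp1 : p ≤ 1) (n : ℕ) :
    ∑ k ∈ Finset.range (n + 1) with (k : ℕ) < p / 2 * n + 1,
        n.choose k * (p ^ k * (1 - p) ^ (n - k)) ≤
      2 * exp (-((1 - log 2) * (p / 2) * n)) := by
  -- For `a = 1 / 2` the base `1 - p / 2 ≤ exp (-p / 2)` beats the factor `2 ^ (p / 2)`, as `2 < e`.
  have hbase : (p * 2⁻¹ + (1 - p)) ^ n ≤ exp (-(p / 2)) ^ n :=
    pow_le_pow_left₀ (by linarith) (by linarith [add_one_le_exp (-(p / 2))]) n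
  calc _ ≤ (2⁻¹ : ℝ) ^ (-(p / 2 * n + 1)) * (p * 2⁻¹ + (1 - p)) ^ n :=
        sum_binomial_lt_le hp0 hp1 (by norm_num) (by norm_num) _ n
    _ ≤ (2⁻¹ : ℝ) ^ (-(p / 2 * n + 1)) * exp (-(p / 2)) ^ n := by gcongr
    _ = 2 * exp (-((1 - log 2) * (p / 2) * n)) := by
        rw [inv_rpow two_pos.le, rpow_neg two_pos.le, inv_inv, rpow_add_one two_ne_zero,
          rpow_def_of_pos two_pos, ← exp_nat_mul, mul_right_comm, ← exp_add, mul_comm]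
        ring_nf

theorem sum_binomial_mul_le (hp0 : 0 ≤ p) (hp1 : p ≤ 1) {n : ℕ} {g : ℕ → ℝ} {α D : ℝ}
    (hα0 : 0 ≤ α) (hD0 : 0 ≤ D) (hD : ∀ k, g k ≤ D)
    (hα : ∀ k ≤ n, p / 2 * n + 1 ≤ k → g k ≤ α) :
    ∑ k ∈ Finset.range (n + 1), n.choose k * (p ^ k * (1 - p) ^ (n - k) * g k) ≤
      α + 2 * D * exp (-((1 - log 2) * (p / 2) * n)) := by
  have : 0 ≤ 1 - p := sub_nonneg.2 hp1
  set b : ℕ → ℝ := fun k => n.choose k * (p ^ k * (1 - p) ^ (n - k)) with hb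
  have hb0 (k : ℕ) : 0 ≤ b k := by positivity
  have hb_sum : ∑ k ∈ Finset.range (n + 1), b k = 1 := by
    calc ∑ k ∈ Finset.range (n + 1), b k = (p + (1 - p)) ^ n := by
          simp only [hb, add_pow, mul_comm (n.choose _ : ℝ)]
      _ = 1 := by rw [add_sub_cancel, one_pow]
  have hsplit (k) (hk : k ∈ Finset.range (n + 1)) :
      b k * g k ≤ α * b k + D * if (k : ℝ) < p / 2 * n + 1 then b k else 0 := by
    split_ifs with hlt
    · linarith [mul_le_mul_of_nonneg_left (hD k) (hb0 k), mul_nonneg hα0 (hb0 k)]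
    · have hgα := hα k (Nat.lt_succ_iff.1 (Finset.mem_range.1 hk)) (not_lt.1 hlt)
      linarith [mul_le_mul_of_nonneg_left hgα (hb0 k)]
  calc _ = ∑ k ∈ Finset.range (n + 1), b k * g k := by simp only [hb, mul_assoc]
    _ ≤ ∑ k ∈ Finset.range (n + 1), (α * b k + D * if (k : ℝ) < p / 2 * n + 1 then b k else 0) :=
        Finset.sum_le_sum hsplit
    _ = α + D * ∑ k ∈ Finset.range (n + 1) with (k : ℕ) < p / 2 * n + 1, b k := by
        rw [Finset.sum_add_distrib, ← Finset.mul_sum, ← Finset.mul_sum, hb_sum,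
          ← Finset.sum_filter, mul_one]
    _ ≤ α + D * (2 * exp (-((1 - log 2) * (p / 2) * n))) := by
        gcongr
        exact sum_binomial_lt_half_mean_add_one_le hp0 hp1 n
    _ = α + 2 * D * exp (-((1 - log 2) * (p / 2) * n)) := by ring

end BinomialTail

section CappedFillDistance

variable {M : Type*} [PseudoEMetricSpace M]

/-- The fill distance of a set, capped at the diameter of the space since the uncapped supremum
is infinite on the empty set. -/
noncomputable def cappedFillDistance (S : Set M) : ℝ≥0∞ :=
  min (Metric.ediam (univ : Set M)) (⨆ x : M, Metric.infEDist x S)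

theorem cappedFillDistance_antitone : Antitone (cappedFillDistance (M := M)) := fun _ _ hST =>
  min_le_min le_rfl (iSup_mono fun _ => Metric.infEDist_anti hST)

theorem measurable_cappedFillDistance_range [SecondCountableTopology M] [MeasurableSpace M]
    [OpensMeasurableSpace M] (n : ℕ) :
    Measurable fun z : Fin n → M => cappedFillDistance (range z) := by
  refine measurable_const.min (LowerSemicontinuous.measurable ?_)
  refine lowerSemicontinuous_iSup fun x => Continuous.lowerSemicontinuous ?_
  simp only [Metric.infEDist, iInf_range, ← Finset.inf_univ_eq_iInf]
  exact Continuous.finset_inf_apply fun i _ => continuous_const.edist (continuous_apply i)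

end CappedFillDistance

theorem cappedFillDistance_rpow_le {M : Type*} [PseudoMetricSpace M] [BoundedSpace M] {s : ℝ}
    (hs : 0 ≤ s) (S : Set M) :
    cappedFillDistance S ^ s ≤ ENNReal.ofReal (Metric.diam (univ : Set M) ^ s) := by
  rw [← ENNReal.ofReal_rpow_of_nonneg Metric.diam_nonneg hs, Metric.diam,
    ENNReal.ofReal_toReal BoundedSpace.bounded_univ.ediam_ne_top]
  exact ENNReal.rpow_le_rpow (min_le_left _ _) hs

section FillDistance

variable {M : Type*} [MetricSpace M]

theorem fillDistance_eq_toReal_cappedFillDistance {n : ℕ} [NeZero n] (z : Fin n → M) :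
    fillDistance z = (cappedFillDistance (range z)).toReal := by
  have hdist (x : M) : Metric.infEDist x (range z) = ⨅ i, edist x (z i) := by
    simp only [Metric.infEDist, iInf_range]
  have hcap : ⨆ x, ⨅ i, edist x (z i) ≤ Metric.ediam (univ : Set M) := iSup_le fun x =>
    (iInf_le _ 0).trans (Metric.edist_le_ediam_of_mem (mem_univ _) (mem_univ _))
  simp only [cappedFillDistance, hdist, min_eq_right hcap]
  have hfinite (x : M) : ⨅ i, edist x (z i) ≠ ∞ :=
    ne_top_of_le_ne_top (edist_ne_top x (z 0)) (iInf_le _ 0)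
  rw [ENNReal.toReal_iSup hfinite, fillDistance]
  simp only [ENNReal.toReal_iInf fun _ => edist_ne_top _ _, dist_edist]

variable [BoundedSpace M] [SecondCountableTopology M] [MeasurableSpace M] [OpensMeasurableSpace M]
  {s : ℝ}

theorem integral_fillDistance_rpow (hs : 0 ≤ s) (μ : Measure M) {n : ℕ} (hn : n ≠ 0) :
    ∫ z : Fin n → M, fillDistance z ^ s ∂(Measure.pi fun _ => μ) =
      (sampleMean μ (fun S => cappedFillDistance S ^ s) n).toReal := by
  have : NeZero n := ⟨hn⟩
  simp only [fillDistance_eq_toReal_cappedFillDistance, ENNReal.toReal_rpow]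
  exact integral_toReal ((measurable_cappedFillDistance_range n).pow_const s).aemeasurable
    (.of_forall fun _ => (cappedFillDistance_rpow_le hs _).trans_lt ENNReal.ofReal_lt_top)

theorem integral_fillDistance_rpow_le_of_smul_le (hs : 0 ≤ s) {ν P : Measure M}
    [IsProbabilityMeasure ν] [IsProbabilityMeasure P] {w : ℝ} (hw : 0 ≤ w)
    (hνP : ENNReal.ofReal w • ν ≤ P) {n : ℕ} (hn : n ≠ 0) {α : ℝ} (hα0 : 0 ≤ α)
    (hα : ∀ k ≤ n, w / 2 * n + 1 ≤ k →
      ∫ z : Fin k → M, fillDistance z ^ s ∂(Measure.pi fun _ => ν) ≤ α) :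
    ∫ z : Fin n → M, fillDistance z ^ s ∂(Measure.pi fun _ => P) ≤
      α + 2 * Metric.diam (univ : Set M) ^ s * exp (-((1 - log 2) * (w / 2) * n)) := by
  have hw1 : w ≤ 1 := by simpa using hνP univ
  have hD := cappedFillDistance_rpow_le (M := M) hs
  have hD0 : 0 ≤ Metric.diam (univ : Set M) ^ s := rpow_nonneg Metric.diam_nonneg s
  rw [integral_fillDistance_rpow hs P hn]
  have hanti : Antitone fun S : Set M => cappedFillDistance S ^ s := fun _ _ hST =>
    ENNReal.rpow_le_rpow (cappedFillDistance_antitone hST) hs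
  have hmeas (k : ℕ) : Measurable fun z : Fin k → M => cappedFillDistance (range z) ^ s :=
    (measurable_cappedFillDistance_range k).pow_const s
  have hdiam (k : ℕ) : (sampleMean ν (fun S => cappedFillDistance S ^ s) k).toReal ≤
      Metric.diam (univ : Set M) ^ s :=
    ENNReal.toReal_le_of_le_ofReal hD0 (sampleMean_le hD k)
  refine (toReal_sampleMean_le_sum_binomial hw hνP hanti hmeas ENNReal.ofReal_ne_top hD n).trans
    (sum_binomial_mul_le hw hw1 hα0 hD0 hdiam fun k hkn hk => ?_)
  have hk0 : (0 : ℝ) < k := lt_of_lt_of_le (by positivity) hk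
  rw [← integral_fillDistance_rpow hs ν (Nat.cast_pos.1 hk0).ne']
  exact hα k hkn hk

end FillDistance

section Rate

variable {c : ℝ}

theorem rpow_neg_mul_log_rpow_le (hc : 0 ≤ c) {θ x y : ℝ} (hθ : 0 < θ) (hx : 1 ≤ x) (hxy : x ≤ y)
    (hyx : θ * y ≤ x) :
    x ^ (-c) * log x ^ c ≤ θ ^ (-c) * (y ^ (-c) * log y ^ c) := by
  have hy : 0 < y := by linarith
  calc x ^ (-c) * log x ^ c ≤ (θ * y) ^ (-c) * log y ^ c :=
        mul_le_mul (rpow_le_rpow_of_nonpos (by positivity) hyx (neg_nonpos.2 hc))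
          (rpow_le_rpow (log_nonneg hx) (log_le_log (by linarith) hxy) hc)
          (rpow_nonneg (log_nonneg hx) c) (by positivity)
    _ = θ ^ (-c) * (y ^ (-c) * log y ^ c) := by rw [mul_rpow hθ.le hy.le, mul_assoc]

theorem exists_exp_neg_mul_le_rpow_neg_mul_log_rpow (hc : 0 ≤ c) {b : ℝ} (hb : 0 < b) :
    ∃ B : ℝ, ∀ n : ℕ, 2 ≤ n → exp (-(b * n)) ≤ B * ((n : ℝ) ^ (-c) * log n ^ c) := by
  have hlog2 : 0 < log 2 := log_pos one_lt_two
  obtain ⟨B, hB⟩ := ((tendsto_rpow_mul_exp_neg_mul_atTop_nhds_zero c b hb).comp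
    tendsto_natCast_atTop_atTop).bddAbove_range
  refine ⟨B / log 2 ^ c, fun n hn => ?_⟩
  have hn0 : (0 : ℝ) < n := by positivity
  have hbound : (n : ℝ) ^ c * exp (-(b * n)) ≤ B := by
    simpa only [Function.comp_apply, neg_mul] using hB (mem_range_self n)
  have hB0 : 0 ≤ B := le_trans (by positivity) hbound
  have hlog : log 2 ^ c ≤ log n ^ c :=
    rpow_le_rpow hlog2.le (log_le_log two_pos (mod_cast hn)) hc
  calc exp (-(b * n)) ≤ B * (n : ℝ) ^ (-c) := by
        rwa [rpow_neg hn0.le, ← div_eq_mul_inv, le_div_iff₀' (by positivity)]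
    _ = B * (n : ℝ) ^ (-c) / log 2 ^ c * log 2 ^ c := by field_simp
    _ ≤ B * (n : ℝ) ^ (-c) / log 2 ^ c * log n ^ c := by gcongr
    _ = B / log 2 ^ c * ((n : ℝ) ^ (-c) * log n ^ c) := by ring

end Rate

theorem smul_le_of_ae_le_rnDeriv {X : Type*} [MeasurableSpace X] {ν P : Measure X} {a : ℝ≥0∞}
    (h : ∀ᵐ x ∂ν, a ≤ P.rnDeriv ν x) : a • ν ≤ P := by
  rw [← withDensity_const]
  exact (withDensity_mono h).trans (Measure.withDensity_rnDeriv_le P ν)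

theorem fill_distance_rate_transfer_general
    {M : Type*} [MetricSpace M] [BoundedSpace M] [SecondCountableTopology M] [MeasurableSpace M]
    [OpensMeasurableSpace M] {s c : ℝ} (hs : 0 ≤ s) (hc : 0 ≤ c)
    {ν P : Measure M} [IsProbabilityMeasure ν] [IsProbabilityMeasure P]
    {w : ℝ} (hw : 0 < w) (hνP : ENNReal.ofReal w • ν ≤ P) {C : ℝ}
    (hC : ∀ n : ℕ, 2 ≤ n →
      ∫ z : Fin n → M, (fillDistance z) ^ s ∂(Measure.pi fun _ : Fin n => ν) ≤
        C * (n : ℝ) ^ (-c) * (Real.log n) ^ c) :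
    ∃ C' : ℝ, ∀ n : ℕ, 2 ≤ n →
      ∫ z : Fin n → M, (fillDistance z) ^ s ∂(Measure.pi fun _ : Fin n => P) ≤
        C' * (n : ℝ) ^ (-c) * (Real.log n) ^ c := by
  have hb : 0 < (1 - log 2) * (w / 2) := mul_pos (by linarith [log_two_lt_d9]) (half_pos hw)
  obtain ⟨B, hB⟩ := exists_exp_neg_mul_le_rpow_neg_mul_log_rpow hc hb
  refine ⟨|C| * (w / 2) ^ (-c) + 2 * Metric.diam (univ : Set M) ^ s * B, fun n hn => ?_⟩
  set r : ℕ → ℝ := fun k => (k : ℝ) ^ (-c) * log k ^ c with hr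
  have hr0 (k : ℕ) : 0 ≤ r k := by positivity
  have hν : ∀ k ≤ n, w / 2 * n + 1 ≤ k →
      ∫ z : Fin k → M, fillDistance z ^ s ∂(Measure.pi fun _ => ν) ≤
        |C| * ((w / 2) ^ (-c) * r n) := by
    intro k hkn hk
    have hk1 : (1 : ℝ) < k := lt_of_lt_of_le (lt_add_of_pos_left 1 (by positivity)) hk
    calc _ ≤ C * r k := (hC k (mod_cast hk1)).trans_eq (mul_assoc _ _ _)
      _ ≤ |C| * r k := mul_le_mul_of_nonneg_right (le_abs_self C) (hr0 k)
      _ ≤ |C| * ((w / 2) ^ (-c) * r n) := by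
          gcongr
          exact rpow_neg_mul_log_rpow_le hc (half_pos hw) hk1.le (mod_cast hkn) (by linarith)
  calc _ ≤ |C| * ((w / 2) ^ (-c) * r n) +
          2 * Metric.diam (univ : Set M) ^ s * exp (-((1 - log 2) * (w / 2) * n)) :=
        integral_fillDistance_rpow_le_of_smul_le hs hw.le hνP (by omega)
          (mul_nonneg (abs_nonneg C) (mul_nonneg (by positivity) (hr0 n))) hν
    _ ≤ |C| * ((w / 2) ^ (-c) * r n) + 2 * Metric.diam (univ : Set M) ^ s * (B * r n) := by
        gcongr
        exact hB n hn
    _ = _ := by rw [hr]; ring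

/-- If the expected `s`-th power of the fill distance of `n` i.i.d. samples from a reference
probability measure `ν` on a compact metric space decays like `n^{-c} (log n)^c`, then the same
rate holds for i.i.d. samples from any probability measure `P` whose density with respect to `ν`
is bounded below by some `w ∈ (0,1)`. -/
theorem fill_distance_rate_transfer
    {M : Type*} [MetricSpace M] [CompactSpace M] [MeasurableSpace M] [BorelSpace M]
    (s c : ℝ) (hs : 0 < s) (hc : 0 < c)
    (ν P : Measure M) [IsProbabilityMeasure ν] [IsProbabilityMeasure P]
    (hPν : P ≪ ν) (w : ℝ) (hw : w ∈ Set.Ioo (0 : ℝ) 1)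
    (hlb : ∀ᵐ x ∂ν, ENNReal.ofReal w ≤ P.rnDeriv ν x)
    (C : ℝ)
    (hC : ∀ n : ℕ, 2 ≤ n →
      ∫ z : Fin n → M, (fillDistance z) ^ s ∂(Measure.pi fun _ : Fin n => ν) ≤
        C * (n : ℝ) ^ (-c) * (Real.log n) ^ c) :
    ∃ C' : ℝ, ∀ n : ℕ, 2 ≤ n →
      ∫ z : Fin n → M, (fillDistance z) ^ s ∂(Measure.pi fun _ : Fin n => P) ≤
        C' * (n : ℝ) ^ (-c) * (Real.log n) ^ c :=
  fill_distance_rate_transfer_general hs.le hc.le hw.1 (smul_le_of_ae_le_rnDeriv hlb) hC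
end

section
/- Let w ∈ (0,1), a > 0 and D > 0, and for each n ∈ ℕ let m_n be a Binomial(n, w) random variable. Define φ : ℕ → ℝ by φ(m) = D if m ≤ 1 and φ(m) = min(D, m^{−a} (log m)^{a}) if m ≥ 2. Then there exists a finite constant C′ such that E[φ(m_n)] ≤ C′ n^{−a} (log n)^{a} for all n ≥ 2. -/
open Finset

/-!
Up to the factor `p! / w ^ p`, the mass of `Bin(n, w)` at `k` times `((n + 1) / (k + 1)) ^ p` is at
most the mass of `Bin(n + p, w)` at `k + p`, and these masses sum to at most `1`. Hence
`E[(m_n + 1) ^ (-a)] = O((n + 1) ^ (-a))` without any tail bound or splitting of the range of `m_n`.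
Since `m_n ≤ n`, the logarithmic factor is bounded by its value at `n`.
-/

open MeasureTheory ProbabilityTheory
open scoped unitInterval

lemma choose_mul_succ_pow_le (n k p : ℕ) :
    n.choose k * (n + 1) ^ p ≤ p.factorial * (k + 1) ^ p * (n + p).choose (k + p) := by
  have succ_pow_le : (n + 1) ^ p ≤ p.factorial * (n + p).choose p := by
    rw [← Nat.ascFactorial_eq_factorial_mul_choose]
    exact Nat.pow_succ_le_ascFactorial (n + 1) p
  have choose_mul_choose :
      (n + p).choose (k + p) * (k + p).choose p = (n + p).choose p * n.choose k := by
    simpa only [Nat.add_sub_cancel] using Nat.choose_mul (n := n + p) (Nat.le_add_left p k)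
  calc n.choose k * (n + 1) ^ p
      ≤ n.choose k * (p.factorial * (n + p).choose p) := by gcongr
    _ = p.factorial * (k + p).choose p * (n + p).choose (k + p) := by
      rw [mul_left_comm, mul_comm (n.choose k), ← choose_mul_choose]
      ring
    _ ≤ p.factorial * (k + 1) ^ p * (n + p).choose (k + p) := by
      gcongr
      exact Nat.choose_add_le_add_one_pow k p

section NegativeMoments

variable {w : I}

lemma binomial_real_singleton_mul_pow_le (hw : 0 < w) (n k p : ℕ) :
    Bin(n, w).real {k} * ((n + 1) / (k + 1) : ℝ) ^ p ≤
      p.factorial / (w : ℝ) ^ p * Bin(n + p, w).real {k + p} := by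
  have hw₀ : (0 : ℝ) < w := hw
  have hw₁ : (0 : ℝ) ≤ 1 - w := unitInterval.one_minus_nonneg w
  have choose_le : (n.choose k : ℝ) * (n + 1) ^ p ≤
      p.factorial * (k + 1) ^ p * (n + p).choose (k + p) :=
    mod_cast choose_mul_succ_pow_le n k p
  rw [binomial_real_singleton, binomial_real_singleton, Nat.add_sub_add_right, div_pow]
  calc (n.choose k : ℝ) * w ^ k * (1 - w) ^ (n - k) * ((n + 1) ^ p / (k + 1) ^ p)
      = n.choose k * (n + 1) ^ p * (w ^ k * (1 - w) ^ (n - k) / (k + 1) ^ p) := by ring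
    _ ≤ p.factorial * (k + 1) ^ p * (n + p).choose (k + p) *
          (w ^ k * (1 - w) ^ (n - k) / (k + 1) ^ p) := by gcongr
    _ = p.factorial / w ^ p * ((n + p).choose (k + p) * w ^ (k + p) * (1 - w) ^ (n - k)) := by
      rw [pow_add]
      field_simp

lemma integral_binomial_eq_sum_range (n : ℕ) (w : I) (f : ℕ → ℝ) :
    ∫ k, f k ∂Bin(n, w) =
      ∑ k ∈ range (n + 1), (n.choose k : ℝ) * w ^ k * (1 - w) ^ (n - k) * f k := by
  simp only [integral_binomial, Nat.range_succ_eq_Iic, smul_eq_mul]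

lemma integral_binomial_succ_div_succ_pow_le (hw : 0 < w) (n p : ℕ) :
    ∫ k : ℕ, ((n + 1) / (k + 1) : ℝ) ^ p ∂Bin(n, w) ≤ p.factorial / (w : ℝ) ^ p := by
  have sum_shifted_le_one : ∑ k ∈ range (n + 1), Bin(n + p, w).real {k + p} ≤ 1 := by
    have sum_eq := sum_map (range (n + 1)) (addRightEmbedding p) fun k => Bin(n + p, w).real {k}
    simp only [addRightEmbedding_apply] at sum_eq
    rw [← sum_eq, sum_measureReal_singleton]
    exact measureReal_le_one
  calc ∫ k : ℕ, ((n + 1) / (k + 1) : ℝ) ^ p ∂Bin(n, w)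
      = ∑ k ∈ range (n + 1), Bin(n, w).real {k} * ((n + 1) / (k + 1) : ℝ) ^ p := by
        simp only [integral_binomial_eq_sum_range, binomial_real_singleton]
    _ ≤ ∑ k ∈ range (n + 1), p.factorial / (w : ℝ) ^ p * Bin(n + p, w).real {k + p} :=
        sum_le_sum fun k _ => binomial_real_singleton_mul_pow_le hw n k p
    _ = p.factorial / (w : ℝ) ^ p * ∑ k ∈ range (n + 1), Bin(n + p, w).real {k + p} :=
        (mul_sum ..).symm
    _ ≤ p.factorial / (w : ℝ) ^ p :=
        mul_le_of_le_one_right (div_nonneg (by positivity) (pow_nonneg hw.le p)) sum_shifted_le_one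

lemma ae_le_binomial (n : ℕ) (w : I) : ∀ᵐ k ∂Bin(n, w), k ≤ n :=
  ae_le_of_hasLaw_binomial HasLaw.id

lemma succ_rpow_neg_le {n k : ℕ} (hkn : k ≤ n) (a : ℝ) :
    (k + 1 : ℝ) ^ (-a) ≤ (n + 1 : ℝ) ^ (-a) * ((n + 1) / (k + 1) : ℝ) ^ ⌈a⌉₊ := by
  have one_le_ratio : (1 : ℝ) ≤ (n + 1) / (k + 1) := by
    rw [one_le_div (by positivity)]
    exact_mod_cast Nat.succ_le_succ hkn
  calc (k + 1 : ℝ) ^ (-a) = (n + 1 : ℝ) ^ (-a) * ((n + 1) / (k + 1) : ℝ) ^ a := by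
        rw [Real.div_rpow (by positivity) (by positivity), Real.rpow_neg (by positivity),
          Real.rpow_neg (by positivity)]
        field_simp
    _ ≤ (n + 1 : ℝ) ^ (-a) * ((n + 1) / (k + 1) : ℝ) ^ ⌈a⌉₊ := by
        rw [← Real.rpow_natCast]
        gcongr
        exact Nat.le_ceil a

lemma integral_binomial_succ_rpow_neg_le (hw : 0 < w) (n : ℕ) (a : ℝ) :
    ∫ k : ℕ, (k + 1 : ℝ) ^ (-a) ∂Bin(n, w) ≤
      ⌈a⌉₊.factorial / (w : ℝ) ^ ⌈a⌉₊ * (n + 1 : ℝ) ^ (-a) :=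
  calc ∫ k : ℕ, (k + 1 : ℝ) ^ (-a) ∂Bin(n, w)
      ≤ ∫ k : ℕ, (n + 1 : ℝ) ^ (-a) * ((n + 1) / (k + 1) : ℝ) ^ ⌈a⌉₊ ∂Bin(n, w) :=
        integral_mono_ae (integrable_binomial _) (integrable_binomial _) <|
          (ae_le_binomial n w).mono fun _ hkn => succ_rpow_neg_le hkn a
    _ = (n + 1 : ℝ) ^ (-a) * ∫ k : ℕ, ((n + 1) / (k + 1) : ℝ) ^ ⌈a⌉₊ ∂Bin(n, w) :=
        integral_const_mul _ _
    _ ≤ (n + 1 : ℝ) ^ (-a) * (⌈a⌉₊.factorial / (w : ℝ) ^ ⌈a⌉₊) := by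
        gcongr
        exact integral_binomial_succ_div_succ_pow_le hw n ⌈a⌉₊
    _ = _ := mul_comm _ _

end NegativeMoments

section Rate

variable {a : ℝ} {L φ : ℕ → ℝ}

lemma rpow_neg_le_rpow_mul_rpow_neg (ha : 0 ≤ a) {c x y : ℝ} (hc : 0 < c) (hy : 0 < y)
    (hyx : y ≤ c * x) : x ^ (-a) ≤ c ^ a * y ^ (-a) := by
  have hx : 0 < x := pos_of_mul_pos_right (hy.trans_le hyx) hc.le
  calc x ^ (-a) = c ^ a * (c * x) ^ (-a) := by
        rw [Real.mul_rpow hc.le hx.le, ← mul_assoc, ← Real.rpow_add hc, add_neg_cancel,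
          Real.rpow_zero, one_mul]
    _ ≤ c ^ a * y ^ (-a) := by
        gcongr ?_ * ?_
        exact Real.rpow_le_rpow_of_nonpos hy hyx (neg_nonpos.mpr ha)

lemma exists_le_mul_succ_rpow_neg (ha : 0 ≤ a) (hL : MonotoneOn L (Set.Ici 2)) (hL₂ : 0 < L 2)
    (hφ : ∀ m, 2 ≤ m → φ m ≤ (m : ℝ) ^ (-a) * L m) :
    ∃ K, 0 ≤ K ∧ ∀ n, 2 ≤ n → ∀ k ≤ n, φ k ≤ K * L n * (k + 1 : ℝ) ^ (-a) := by
  set M : ℝ := max 1 (max (φ 0) (φ 1) / L 2)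
  have one_le_M : 1 ≤ M := le_max_left _ _
  refine ⟨M * 2 ^ a, by positivity, fun n hn k hkn => ?_⟩
  have L_two_le : L 2 ≤ L n := hL Set.self_mem_Ici hn hn
  have L_nonneg : 0 ≤ L n := hL₂.le.trans L_two_le
  suffices ∃ x : ℝ, (k + 1 : ℝ) ≤ 2 * x ∧ φ k ≤ M * L n * x ^ (-a) by
    obtain ⟨x, hkx, hφx⟩ := this
    calc φ k ≤ M * L n * x ^ (-a) := hφx
      _ ≤ M * L n * (2 ^ a * (k + 1 : ℝ) ^ (-a)) := by
        gcongr
        exact rpow_neg_le_rpow_mul_rpow_neg ha two_pos (by positivity) hkx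
      _ = M * 2 ^ a * L n * (k + 1 : ℝ) ^ (-a) := by ring
  rcases Nat.lt_or_ge k 2 with hk | hk
  · refine ⟨1, by exact_mod_cast (by omega : k + 1 ≤ 2 * 1), ?_⟩
    calc φ k ≤ max (φ 0) (φ 1) := by interval_cases k <;> simp
      _ = max (φ 0) (φ 1) / L 2 * L 2 := (div_mul_cancel₀ _ hL₂.ne').symm
      _ ≤ M * L n := by
        gcongr
        exact le_max_right _ _
      _ = M * L n * 1 ^ (-a) := by rw [Real.one_rpow, mul_one]
  · refine ⟨k, by exact_mod_cast (by omega : k + 1 ≤ 2 * k), ?_⟩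
    calc φ k ≤ (k : ℝ) ^ (-a) * L k := hφ k hk
      _ ≤ (k : ℝ) ^ (-a) * L n := by
        gcongr
        exact hL hk hn hkn
      _ ≤ (k : ℝ) ^ (-a) * (M * L n) := by
        gcongr
        exact le_mul_of_one_le_left L_nonneg one_le_M
      _ = M * L n * (k : ℝ) ^ (-a) := mul_comm _ _

theorem binomial_expectation_rate_general {w : I} (hw : 0 < w) (ha : 0 ≤ a)
    (hL : MonotoneOn L (Set.Ici 2)) (hL₂ : 0 < L 2)
    (hφ : ∀ m, 2 ≤ m → φ m ≤ (m : ℝ) ^ (-a) * L m) :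
    ∃ C : ℝ, ∀ n : ℕ, 2 ≤ n → ∫ k, φ k ∂Bin(n, w) ≤ C * (n : ℝ) ^ (-a) * L n := by
  obtain ⟨K, hK, φ_le⟩ := exists_le_mul_succ_rpow_neg ha hL hL₂ hφ
  set A : ℝ := ⌈a⌉₊.factorial / (w : ℝ) ^ ⌈a⌉₊
  have A_nonneg : 0 ≤ A := div_nonneg (by positivity) (pow_nonneg hw.le _)
  refine ⟨K * A, fun n hn => ?_⟩
  have L_nonneg : 0 ≤ L n := hL₂.le.trans (hL Set.self_mem_Ici hn hn)
  calc ∫ k, φ k ∂Bin(n, w)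
      ≤ ∫ k : ℕ, K * L n * (k + 1 : ℝ) ^ (-a) ∂Bin(n, w) :=
        integral_mono_ae (integrable_binomial _) (integrable_binomial _) <|
          (ae_le_binomial n w).mono (φ_le n hn)
    _ = K * L n * ∫ k : ℕ, (k + 1 : ℝ) ^ (-a) ∂Bin(n, w) := integral_const_mul _ _
    _ ≤ K * L n * (A * (n + 1 : ℝ) ^ (-a)) := by
        gcongr
        exact integral_binomial_succ_rpow_neg_le hw n a
    _ ≤ K * L n * (A * (n : ℝ) ^ (-a)) := by
        gcongr ?_ * (?_ * ?_)
        exact Real.rpow_le_rpow_of_nonpos (by positivity) (by linarith) (neg_nonpos.mpr ha)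
    _ = K * A * (n : ℝ) ^ (-a) * L n := by ring

end Rate

lemma monotone_log_natCast_rpow {b : ℝ} (hb : 0 ≤ b) :
    Monotone fun n : ℕ => Real.log n ^ b := by
  intro m n hmn
  refine Real.rpow_le_rpow (Real.log_natCast_nonneg m) ?_ hb
  rcases m.eq_zero_or_pos with rfl | hm
  · simpa only [Nat.cast_zero, Real.log_zero] using Real.log_natCast_nonneg n
  · gcongr

/-- If `m_n ~ Binomial(n, w)` and `φ(m) = D` for `m ≤ 1`, `φ(m) = min(D, m^{-a} (log m)^a)`
for `m ≥ 2`, then `E[φ(m_n)] = O(n^{-a} (log n)^a)`. -/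
theorem binomial_expectation_rate
    (w : ℝ) (hw : w ∈ Set.Ioo (0 : ℝ) 1) (a : ℝ) (ha : 0 < a) (D : ℝ) (hD : 0 < D)
    (φ : ℕ → ℝ)
    (hφ₁ : ∀ m : ℕ, m ≤ 1 → φ m = D)
    (hφ₂ : ∀ m : ℕ, 2 ≤ m → φ m = min D ((m : ℝ) ^ (-a) * (Real.log m) ^ a)) :
    ∃ C' : ℝ, ∀ n : ℕ, 2 ≤ n →
      ∑ k ∈ Finset.range (n + 1),
          (n.choose k : ℝ) * w ^ k * (1 - w) ^ (n - k) * φ k ≤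
        C' * (n : ℝ) ^ (-a) * (Real.log n) ^ a := by
  simpa only [integral_binomial_eq_sum_range] using
    binomial_expectation_rate_general (w := ⟨w, hw.1.le, hw.2.le⟩) hw.1 ha.le
      ((monotone_log_natCast_rpow ha.le).monotoneOn _)
      (Real.rpow_pos_of_pos (Real.log_pos Nat.one_lt_ofNat) a)
      fun m hm => (hφ₂ m hm).trans_le (min_le_right _ _)
end
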